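/- Let -1/2 < s₀ ≤ 0. Then there exists b₁ > 1/2 such that for every b with 1/2 < b < b₁ and every Schwartz function ψ : ℝ → ℂ there is a constant C > 0 with the following property: for every sequence α : ℤ → ℂ with ∑_{k∈ℤ} ⟨k⟩^{2s₀} |α_k|² < ∞, defining for q ∈ ℤ and τ ∈ ℝ the quantity ĉ_q(τ) = ∑_{n∈ℤ} conj(α_n) · conj(α_{-n-q}) · ψ̂(τ - n² - (n+q)²), one has ∑_{q∈ℤ} ∫_ℝ ⟨τ + q²⟩^{2(b-1)} |ĉ_q(τ)|² dτ ≤ C (∑_{k∈ℤ} ⟨k⟩^{2s₀} |α_k|²)². -/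

import Mathlib

/-- The Japanese bracket `⟨x⟩ = (1 + x²)^{1/2}`. -/
noncomputable def jb (x : ℝ) : ℝ := Real.sqrt (1 + x ^ 2)

/-- The time-Fourier transform `ψ̂(τ) = ∫_ℝ e^{-iτt} ψ(t) dt`. -/
noncomputable def ft (ψ : ℝ → ℂ) (τ : ℝ) : ℂ :=
  ∫ t : ℝ, Complex.exp (-Complex.I * (τ : ℂ) * (t : ℂ)) * ψ t

open MeasureTheory FourierTransform
open scoped ENNReal

lemma aux_two_mul (a b : ℝ≥0∞) : 2 * (a * b) ≤ a ^ 2 + b ^ 2 := by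
  wlog h : a ≤ b generalizing a b
  · have := this b a (le_of_not_ge h)
    rwa [mul_comm b a, add_comm] at this
  obtain ⟨c, rfl⟩ := exists_add_of_le h
  calc 2 * (a * (a + c)) ≤ 2 * (a * (a + c)) + c ^ 2 := le_self_add
    _ = _ := by ring

lemma aux_cs {ι : Type*} (a k : ι → ℝ≥0∞) :
    (∑' n, a n * k n) ^ 2 ≤ (∑' n, k n) * ∑' n, a n ^ 2 * k n := by
  have h : 2 * (∑' n, a n * k n) ^ 2 ≤ 2 * ((∑' n, k n) * ∑' n, a n ^ 2 * k n) := by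
    have e1 : 2 * (∑' n, a n * k n) ^ 2 = ∑' n, ∑' m, 2 * (a n * a m) * (k n * k m) := by
      rw [sq, ← ENNReal.tsum_mul_right, ← ENNReal.tsum_mul_left]
      refine tsum_congr fun n => ?_
      rw [← ENNReal.tsum_mul_left, ← ENNReal.tsum_mul_left]
      refine tsum_congr fun m => by ring
    have e2 : (∑' n, k n) * ∑' n, a n ^ 2 * k n = ∑' n, ∑' m, a m ^ 2 * (k n * k m) := by
      rw [← ENNReal.tsum_mul_right]
      refine tsum_congr fun n => ?_
      rw [← ENNReal.tsum_mul_left]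
      refine tsum_congr fun m => by ring
    have e3 : (∑' n, k n) * ∑' n, a n ^ 2 * k n = ∑' n, ∑' m, a n ^ 2 * (k n * k m) := by
      rw [mul_comm, ← ENNReal.tsum_mul_right]
      refine tsum_congr fun n => ?_
      rw [← ENNReal.tsum_mul_left]
      refine tsum_congr fun m => by ring
    rw [e1, two_mul ((∑' n, k n) * _)]
    nth_rewrite 1 [e3]
    rw [e2, ← ENNReal.tsum_add]
    refine ENNReal.tsum_le_tsum fun n => ?_
    rw [← ENNReal.tsum_add]
    refine ENNReal.tsum_le_tsum fun m => ?_
    rw [← add_mul]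
    gcongr
    exact aux_two_mul _ _
  exact (ENNReal.mul_le_mul_iff_right (by simp) (by simp)).1 h

lemma aux_decay (ψ : SchwartzMap ℝ ℂ) : ∃ D : ℝ, 0 < D ∧ ∀ x : ℝ,
    ‖ft (⇑ψ) x‖ ≤ D * ((1 + x ^ 2) ^ 2)⁻¹ := by
  obtain ⟨C0, h0, H0⟩ := (𝓕 ψ).decay 0 0
  obtain ⟨C4, h4, H4⟩ := (𝓕 ψ).decay 4 0
  refine ⟨2 * (C0 + (2 * Real.pi) ^ 4 * C4), by positivity, fun x => ?_⟩
  have e : ft (⇑ψ) x = (𝓕 ψ) (x / (2 * Real.pi)) := by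
    rw [SchwartzMap.fourier_coe, Real.fourier_real_eq_integral_exp_smul, ft]
    congr 1
    ext t
    rw [smul_eq_mul]
    congr 2
    have : (-2 * Real.pi * t * (x / (2 * Real.pi))) = -(x * t) := by
      field_simp
    rw [this]
    push_cast
    ring
  have H0' := H0 (x / (2 * Real.pi))
  have H4' := H4 (x / (2 * Real.pi))
  simp only [norm_iteratedFDeriv_zero, ← e, pow_zero, one_mul, Real.norm_eq_abs] at H0' H4'
  rw [← div_eq_mul_inv, le_div_iff₀ (by positivity)]
  have hx : |x / (2 * Real.pi)| ^ 4 = x ^ 4 / (2 * Real.pi) ^ 4 := by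
    rw [← div_pow, Even.pow_abs (by decide)]
  rw [hx, div_mul_eq_mul_div, div_le_iff₀ (by positivity)] at H4'
  have hn : 0 ≤ ‖ft (⇑ψ) x‖ := norm_nonneg _
  nlinarith [mul_nonneg hn (sq_nonneg (x ^ 2 - 1))]

/-- the uniformly bounded lattice sum -/
noncomputable def M0 : ℝ≥0∞ := ∑' u : ℤ, ENNReal.ofReal ((1 + (u : ℝ) ^ 2)⁻¹)

lemma M0_ne_top : M0 ≠ ⊤ := by
  have hs : Summable fun u : ℤ => (1 + (u : ℝ) ^ 2)⁻¹ := by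
    have h := (Real.summable_one_div_int_pow (p := 2)).2 (by norm_num)
    refine h.of_norm_bounded_eventually ?_
    rw [Filter.eventually_cofinite]
    refine (Set.finite_singleton (0 : ℤ)).subset ?_
    intro u hu
    by_contra h0
    apply hu
    have hu0 : (u : ℝ) ≠ 0 := by exact_mod_cast h0
    rw [Real.norm_of_nonneg (by positivity), one_div]
    gcongr
    linarith
  rw [M0, ← ENNReal.ofReal_tsum_of_nonneg (fun _ => by positivity) hs]
  exact ENNReal.ofReal_ne_top

lemma aux_sum_shift (c : ℝ) :
    ∑' n : ℤ, ENNReal.ofReal ((1 + (2 * (n : ℝ) + c) ^ 2)⁻¹) ≤ 2 * M0 := by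
  set n0 : ℤ := round (-c / 2) with hn0
  have hr := abs_le.1 (abs_sub_round (-c / 2))
  rw [← hn0] at hr
  rw [M0, ← (Equiv.subRight n0).tsum_eq (fun u : ℤ => ENNReal.ofReal ((1 + (u : ℝ) ^ 2)⁻¹)),
    ← ENNReal.tsum_mul_left]
  refine ENNReal.tsum_le_tsum fun n => ?_
  rw [show (2 : ℝ≥0∞) = ENNReal.ofReal 2 by simp, ← ENNReal.ofReal_mul (by norm_num)]
  apply ENNReal.ofReal_le_ofReal
  simp only [Equiv.subRight_apply, Int.cast_sub]
  rw [← div_eq_mul_inv, inv_eq_one_div, div_le_div_iff₀ (by positivity) (by positivity)]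
  obtain ⟨d, hd⟩ : ∃ d : ℝ, (n0 : ℝ) = -c / 2 - d := ⟨-c / 2 - n0, by ring⟩
  have h1 : -c / 2 - (n0 : ℝ) = d := by rw [hd]; ring
  rw [h1] at hr
  obtain ⟨t, ht⟩ : ∃ t : ℝ, (n : ℝ) = t - c / 2 := ⟨n + c / 2, by ring⟩
  rw [hd, ht]
  have : d ^ 2 ≤ 1 / 4 := by nlinarith
  nlinarith [sq_nonneg (t - d)]

lemma aux_sum (q : ℤ) (τ : ℝ) :
    ∑' n : ℤ, ENNReal.ofReal
      (((1 + (τ - (n : ℝ) ^ 2 - ((n : ℝ) + (q : ℝ)) ^ 2) ^ 2) ^ 2)⁻¹) ≤ 8 * M0 := by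
  set a : ℝ := Real.sqrt (2 * τ - q ^ 2) with ha
  have key : ∀ n : ℤ, ENNReal.ofReal
      (((1 + (τ - (n : ℝ) ^ 2 - ((n : ℝ) + (q : ℝ)) ^ 2) ^ 2) ^ 2)⁻¹) ≤
      2 * ENNReal.ofReal ((1 + (2 * (n : ℝ) + (q + a)) ^ 2)⁻¹) +
      2 * ENNReal.ofReal ((1 + (2 * (n : ℝ) + (q - a)) ^ 2)⁻¹) := by
    intro n
    rw [show (2 : ℝ≥0∞) = ENNReal.ofReal 2 by simp, ← ENNReal.ofReal_mul (by norm_num),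
      ← ENNReal.ofReal_mul (by norm_num), ← ENNReal.ofReal_add (by positivity) (by positivity)]
    apply ENNReal.ofReal_le_ofReal
    set x : ℝ := τ - (n : ℝ) ^ 2 - ((n : ℝ) + (q : ℝ)) ^ 2 with hx
    obtain ⟨y, hy⟩ : ∃ y : ℝ, y = 2 * (n : ℝ) + q := ⟨_, rfl⟩
    have hxy : x = (2 * τ - q ^ 2 - y ^ 2) / 2 := by rw [hx, hy]; ring
    rw [show 2 * (n : ℝ) + (q + a) = y + a by rw [hy]; ring,
      show 2 * (n : ℝ) + (q - a) = y - a by rw [hy]; ring]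
    have ha0 : 0 ≤ a := Real.sqrt_nonneg _
    have hlow : ∀ z : ℝ, z ^ 2 ≤ 2 * |x| →
        ((1 + x ^ 2) ^ 2)⁻¹ ≤ 2 * (1 + z ^ 2)⁻¹ := by
      intro z hz
      rw [← div_eq_mul_inv, inv_eq_one_div, div_le_div_iff₀ (by positivity) (by positivity)]
      have := sq_abs x
      nlinarith [sq_nonneg (|x| - 1), sq_nonneg x, sq_nonneg (x ^ 2)]
    have hp1 : 0 ≤ 2 * (1 + (y + a) ^ 2)⁻¹ := by positivity
    have hp2 : 0 ≤ 2 * (1 + (y - a) ^ 2)⁻¹ := by positivity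
    have hor : (y + a) ^ 2 ≤ 2 * |x| ∨ (y - a) ^ 2 ≤ 2 * |x| := by
      rcases le_total 0 (2 * τ - (q : ℝ) ^ 2) with hA | hA
      · have hsq : a ^ 2 = 2 * τ - q ^ 2 := Real.sq_sqrt hA
        have h2 : 2 * |x| = |a - y| * |a + y| := by
          rw [hxy, ← hsq, ← abs_mul, abs_div, abs_two]
          rw [show (a - y) * (a + y) = a ^ 2 - y ^ 2 by ring]
          ring
        rcases le_total 0 y with h | h
        · right
          rw [h2, ← sq_abs, sq, abs_sub_comm y a]
          gcongr _ * ?_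
          rw [abs_of_nonneg (by linarith : 0 ≤ a + y)]
          exact abs_le.2 ⟨by linarith, by linarith⟩
        · left
          rw [h2, ← sq_abs, sq, add_comm y a]
          gcongr ?_ * _
          rw [abs_of_nonneg (by linarith : 0 ≤ a - y)]
          exact abs_le.2 ⟨by linarith, by linarith⟩
      · left
        have : a = 0 := Real.sqrt_eq_zero_of_nonpos hA
        rw [this, hxy, abs_of_nonpos (by nlinarith [sq_nonneg y])]
        nlinarith
    rcases hor with h | h
    · linarith [hlow _ h]
    · linarith [hlow _ h]
  calc _ ≤ _ := ENNReal.tsum_le_tsum key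
    _ = _ := ENNReal.tsum_add
    _ ≤ 2 * (2 * M0) + 2 * (2 * M0) := by
      rw [ENNReal.tsum_mul_left, ENNReal.tsum_mul_left]
      gcongr
      · exact aux_sum_shift _
      · exact aux_sum_shift _
    _ = _ := by ring

lemma jb_one_le (x : ℝ) : 1 ≤ jb x := by
  rw [jb]; exact Real.one_le_sqrt.2 (by nlinarith [sq_nonneg x])

lemma jb_sq (x : ℝ) : jb x ^ 2 = 1 + x ^ 2 := Real.sq_sqrt (by positivity)

lemma abs_le_jb (x : ℝ) : |x| ≤ jb x := Real.abs_le_sqrt (by linarith)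

lemma aux_pt (s₀ b : ℝ) (hs : s₀ ≤ 0) (hb : 1 / 2 < b) (hb1 : b < 1 + s₀) (q n τ : ℝ) :
    jb (τ + q ^ 2) ^ (2 * (b - 1)) * ((1 + (τ - n ^ 2 - (n + q) ^ 2) ^ 2) ^ 2)⁻¹ ≤
      2 * (jb n ^ (2 * s₀) * jb (-n - q) ^ (2 * s₀)) *
        (1 + (τ - n ^ 2 - (n + q) ^ 2) ^ 2)⁻¹ := by
  set x := τ - n ^ 2 - (n + q) ^ 2 with hx
  set T := jb (τ + q ^ 2) with hT
  have hT1 : 1 ≤ T := jb_one_le _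
  have hn1 := jb_one_le n
  have hm1 := jb_one_le (-n - q)
  set P := jb n * jb (-n - q) with hP
  have hP1 : 1 ≤ P := by rw [hP]; nlinarith
  have hmain : P ≤ T * (2 * (1 + x ^ 2)) := by
    have h1 : P ≤ 1 + (n ^ 2 + (n + q) ^ 2) / 2 := by
      have := jb_sq n
      have := jb_sq (-n - q)
      rw [hP]
      nlinarith [sq_nonneg (jb n - jb (-n - q))]
    have h2 : n ^ 2 + (n + q) ^ 2 ≤ T + |x| := by
      have := (le_abs_self (τ + q ^ 2)).trans (abs_le_jb (τ + q ^ 2))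
      have := neg_abs_le x
      nlinarith [sq_nonneg q]
    have h3 : |x| ≤ (1 + x ^ 2) / 2 := by
      have := sq_abs x
      nlinarith [sq_nonneg (|x| - 1)]
    nlinarith [sq_nonneg x]
  have hy : 1 ≤ 2 * (1 + x ^ 2) := by nlinarith [sq_nonneg x]
  have hpow : T ^ (2 * (b - 1)) ≤ P ^ (2 * s₀) * (2 * (1 + x ^ 2)) := by
    have e : 2 * (b - 1) = -(2 * (1 - b)) := by ring
    have h1 : P ^ (2 * (1 - b)) ≤ T ^ (2 * (1 - b)) * (2 * (1 + x ^ 2)) := by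
      calc P ^ (2 * (1 - b)) ≤ (T * (2 * (1 + x ^ 2))) ^ (2 * (1 - b)) :=
            Real.rpow_le_rpow (by linarith) hmain (by linarith)
        _ = T ^ (2 * (1 - b)) * (2 * (1 + x ^ 2)) ^ (2 * (1 - b)) :=
            Real.mul_rpow (by linarith) (by linarith)
        _ ≤ T ^ (2 * (1 - b)) * (2 * (1 + x ^ 2)) ^ (1 : ℝ) := by
            gcongr
            linarith
        _ = _ := by rw [Real.rpow_one]
    have hTp : 0 < T ^ (2 * (1 - b)) := Real.rpow_pos_of_pos (by linarith) _
    have hPp : 0 < P ^ (2 * (1 - b)) := Real.rpow_pos_of_pos (by linarith) _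
    calc T ^ (2 * (b - 1)) ≤ P ^ (2 * (b - 1)) * (2 * (1 + x ^ 2)) := by
          rw [e, Real.rpow_neg (by linarith), Real.rpow_neg (by linarith), ← div_eq_inv_mul,
            inv_eq_one_div, div_le_div_iff₀ hTp hPp]
          linarith
      _ ≤ P ^ (2 * s₀) * (2 * (1 + x ^ 2)) := by
          gcongr
          linarith
  have hmul : P ^ (2 * s₀) = jb n ^ (2 * s₀) * jb (-n - q) ^ (2 * s₀) :=
    Real.mul_rpow (by linarith) (by linarith)
  rw [← hmul]
  have hpos : 0 < 1 + x ^ 2 := by positivity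
  calc T ^ (2 * (b - 1)) * ((1 + x ^ 2) ^ 2)⁻¹
      ≤ P ^ (2 * s₀) * (2 * (1 + x ^ 2)) * ((1 + x ^ 2) ^ 2)⁻¹ := by gcongr
    _ = _ := by field_simp

lemma jb_cont : Continuous jb := by
  unfold jb; fun_prop

lemma aux_int (s₀ b : ℝ) (hs : s₀ ≤ 0) (hb : 1 / 2 < b) (hb1 : b < 1 + s₀) (q n : ℝ) :
    ∫⁻ τ : ℝ, ENNReal.ofReal (jb (τ + q ^ 2) ^ (2 * (b - 1))) *
      ENNReal.ofReal (((1 + (τ - n ^ 2 - (n + q) ^ 2) ^ 2) ^ 2)⁻¹) ≤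
      ENNReal.ofReal (2 * Real.pi) *
        (ENNReal.ofReal (jb n ^ (2 * s₀)) * ENNReal.ofReal (jb (-n - q) ^ (2 * s₀))) := by
  have hj : ∀ x y : ℝ, 0 ≤ jb x ^ y := fun x y =>
    Real.rpow_nonneg (by linarith [jb_one_le x]) _
  calc _ ≤ ∫⁻ τ : ℝ, ENNReal.ofReal (2 * (jb n ^ (2 * s₀) * jb (-n - q) ^ (2 * s₀))) *
        ENNReal.ofReal ((1 + (τ - (n ^ 2 + (n + q) ^ 2)) ^ 2)⁻¹) := by
        refine lintegral_mono fun τ => ?_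
        rw [← ENNReal.ofReal_mul (hj _ _), ← ENNReal.ofReal_mul (by
          have := hj n (2 * s₀); have := hj (-n - q) (2 * s₀); positivity)]
        apply ENNReal.ofReal_le_ofReal
        rw [← sub_sub]
        exact aux_pt s₀ b hs hb hb1 q n τ
    _ = ENNReal.ofReal (2 * (jb n ^ (2 * s₀) * jb (-n - q) ^ (2 * s₀))) *
        ENNReal.ofReal Real.pi := by
        rw [lintegral_const_mul' _ _ ENNReal.ofReal_ne_top,
          lintegral_sub_right_eq_self (fun τ : ℝ => ENNReal.ofReal ((1 + τ ^ 2)⁻¹)),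
          ← ofReal_integral_eq_lintegral_ofReal integrable_inv_one_add_sq
            (Filter.Eventually.of_forall fun x => by positivity),
          integral_univ_inv_one_add_sq]
    _ = _ := by
        rw [ENNReal.ofReal_mul (p := 2) (by norm_num), ENNReal.ofReal_mul (hj n _),
          ENNReal.ofReal_mul (p := 2) (by norm_num)]
        ring

/-- the case `p = 2`, `s = 0` of the first Picard iterate estimate:
`‖u₁‖_{X^{0,b}} ≲ ‖f‖²_{H^{s₀}}` at the level of Fourier coefficients. -/
theorem stmt1 (s₀ : ℝ) (hs₀l : -(1 / 2) < s₀) (hs₀u : s₀ ≤ 0) :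
    ∃ b₁ : ℝ, 1 / 2 < b₁ ∧ ∀ b : ℝ, 1 / 2 < b → b < b₁ →
      ∀ ψ : SchwartzMap ℝ ℂ, ∃ C : ℝ, 0 < C ∧
        ∀ α : ℤ → ℂ, Summable (fun k : ℤ => jb (k : ℝ) ^ (2 * s₀) * ‖α k‖ ^ 2) →
          (∑' q : ℤ, ∫ τ : ℝ,
              jb (τ + (q : ℝ) ^ 2) ^ (2 * (b - 1)) *
                ‖∑' n : ℤ, (starRingEnd ℂ) (α n) * (starRingEnd ℂ) (α (-n - q)) *
                    ft (⇑ψ) (τ - (n : ℝ) ^ 2 - ((n : ℝ) + (q : ℝ)) ^ 2)‖ ^ 2)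
            ≤ C * (∑' k : ℤ, jb (k : ℝ) ^ (2 * s₀) * ‖α k‖ ^ 2) ^ 2 := by
  refine ⟨1 + s₀, by linarith, fun b hb hb1 ψ => ?_⟩
  obtain ⟨D, hD, hdec⟩ := aux_decay ψ
  set CE : ℝ≥0∞ := ENNReal.ofReal D ^ 2 * (8 * M0) * ENNReal.ofReal (2 * Real.pi) with hCE
  have hCEtop : CE ≠ ⊤ := by
    rw [hCE]
    exact ENNReal.mul_ne_top (ENNReal.mul_ne_top (by simp)
      (ENNReal.mul_ne_top (by simp) M0_ne_top)) ENNReal.ofReal_ne_top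
  refine ⟨CE.toReal + 1, by positivity, fun α hα => ?_⟩
  have hj : ∀ x y : ℝ, 0 ≤ jb x ^ y := fun x y =>
    Real.rpow_nonneg (by linarith [jb_one_le x]) _
  set S : ℝ := ∑' k : ℤ, jb (k : ℝ) ^ (2 * s₀) * ‖α k‖ ^ 2 with hS
  have hS0 : 0 ≤ S := tsum_nonneg fun k => mul_nonneg (hj _ _) (by positivity)
  set F : ℤ → ℝ≥0∞ := fun k => ENNReal.ofReal (jb (k : ℝ) ^ (2 * s₀)) * ‖α k‖ₑ ^ 2 with hF
  have hSF : ENNReal.ofReal S = ∑' k, F k := by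
    rw [hS, ENNReal.ofReal_tsum_of_nonneg (fun k => mul_nonneg (hj _ _) (by positivity)) hα]
    refine tsum_congr fun k => ?_
    rw [ENNReal.ofReal_mul (hj _ _), ENNReal.ofReal_pow (norm_nonneg _), ofReal_norm]
  set K : ℝ → ℝ≥0∞ := fun x => ENNReal.ofReal (((1 + x ^ 2) ^ 2)⁻¹) with hK
  have hft : ∀ x, ‖ft (⇑ψ) x‖ₑ ≤ ENNReal.ofReal D * K x := by
    intro x
    rw [hK, ← ENNReal.ofReal_mul hD.le, ← ofReal_norm]
    exact ENNReal.ofReal_le_ofReal (hdec x)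
  have hq : ∀ q : ℤ, ‖∫ τ : ℝ, jb (τ + (q : ℝ) ^ 2) ^ (2 * (b - 1)) *
                ‖∑' n : ℤ, (starRingEnd ℂ) (α n) * (starRingEnd ℂ) (α (-n - q)) *
                    ft (⇑ψ) (τ - (n : ℝ) ^ 2 - ((n : ℝ) + (q : ℝ)) ^ 2)‖ ^ 2‖ₑ
      ≤ CE * ∑' n : ℤ, F n * F (-n - q) := by
    intro q
    calc _ ≤ _ := enorm_integral_le_lintegral_enorm _
      _ ≤ ∫⁻ τ : ℝ, ENNReal.ofReal D ^ 2 * (8 * M0) * ∑' n : ℤ,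
            (‖α n‖ₑ * ‖α (-n - q)‖ₑ) ^ 2 * (ENNReal.ofReal (jb (τ + (q : ℝ) ^ 2) ^ (2 * (b - 1))) *
              K (τ - (n : ℝ) ^ 2 - ((n : ℝ) + (q : ℝ)) ^ 2)) := by
          refine lintegral_mono fun τ => ?_
          rw [enorm_mul, enorm_pow, enorm_norm, Real.enorm_of_nonneg (hj _ _)]
          set W := ENNReal.ofReal (jb (τ + (q : ℝ) ^ 2) ^ (2 * (b - 1)))
          have h1 : ‖∑' n : ℤ, (starRingEnd ℂ) (α n) * (starRingEnd ℂ) (α (-n - q)) *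
                    ft (⇑ψ) (τ - (n : ℝ) ^ 2 - ((n : ℝ) + (q : ℝ)) ^ 2)‖ₑ ≤
              ENNReal.ofReal D * ∑' n : ℤ, (‖α n‖ₑ * ‖α (-n - q)‖ₑ) *
                K (τ - (n : ℝ) ^ 2 - ((n : ℝ) + (q : ℝ)) ^ 2) := by
            refine enorm_tsum_le_tsum_enorm.trans ?_
            rw [← ENNReal.tsum_mul_left]
            refine ENNReal.tsum_le_tsum fun n => ?_
            have hc : ∀ z : ℂ, ‖(starRingEnd ℂ) z‖ₑ = ‖z‖ₑ := fun z => by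
              rw [← ofReal_norm, RCLike.norm_conj, ofReal_norm]
            rw [enorm_mul, enorm_mul, hc, hc, mul_left_comm]
            gcongr
            exact hft _
          calc _ ≤ W * (ENNReal.ofReal D * ∑' n : ℤ, (‖α n‖ₑ * ‖α (-n - q)‖ₑ) *
                K (τ - (n : ℝ) ^ 2 - ((n : ℝ) + (q : ℝ)) ^ 2)) ^ 2 := by gcongr
            _ = W * ENNReal.ofReal D ^ 2 * (∑' n : ℤ, (‖α n‖ₑ * ‖α (-n - q)‖ₑ) *
                K (τ - (n : ℝ) ^ 2 - ((n : ℝ) + (q : ℝ)) ^ 2)) ^ 2 := by ring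
            _ ≤ W * ENNReal.ofReal D ^ 2 * ((8 * M0) * ∑' n : ℤ, (‖α n‖ₑ * ‖α (-n - q)‖ₑ) ^ 2 *
                K (τ - (n : ℝ) ^ 2 - ((n : ℝ) + (q : ℝ)) ^ 2)) := by
              gcongr
              refine (aux_cs _ _).trans ?_
              gcongr
              exact aux_sum q τ
            _ = ENNReal.ofReal D ^ 2 * (8 * M0) * (W * ∑' n : ℤ, (‖α n‖ₑ * ‖α (-n - q)‖ₑ) ^ 2 *
                K (τ - (n : ℝ) ^ 2 - ((n : ℝ) + (q : ℝ)) ^ 2)) := by ring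
            _ = _ := by
              rw [← ENNReal.tsum_mul_left]
              congr 1
              refine tsum_congr fun n => by ring
      _ = ENNReal.ofReal D ^ 2 * (8 * M0) * ∑' n : ℤ,
            (‖α n‖ₑ * ‖α (-n - q)‖ₑ) ^ 2 * ∫⁻ τ : ℝ,
              (ENNReal.ofReal (jb (τ + (q : ℝ) ^ 2) ^ (2 * (b - 1))) *
              K (τ - (n : ℝ) ^ 2 - ((n : ℝ) + (q : ℝ)) ^ 2)) := by
          have hm : ∀ n : ℤ, Measurable fun τ : ℝ =>
              ENNReal.ofReal (jb (τ + (q : ℝ) ^ 2) ^ (2 * (b - 1))) *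
              K (τ - (n : ℝ) ^ 2 - ((n : ℝ) + (q : ℝ)) ^ 2) := by
            intro n
            have hjm : Measurable jb := jb_cont.measurable
            simp only [hK]
            fun_prop
          rw [lintegral_const_mul' _ _ (ENNReal.mul_ne_top (by simp)
            (ENNReal.mul_ne_top (by simp) M0_ne_top)), lintegral_tsum]
          · congr 1
            refine tsum_congr fun n => ?_
            exact lintegral_const_mul _ (hm n)
          · intro n
            exact ((hm n).const_mul _).aemeasurable
      _ ≤ ENNReal.ofReal D ^ 2 * (8 * M0) * ∑' n : ℤ,
            (‖α n‖ₑ * ‖α (-n - q)‖ₑ) ^ 2 * (ENNReal.ofReal (2 * Real.pi) *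
        (ENNReal.ofReal (jb n ^ (2 * s₀)) * ENNReal.ofReal (jb (-n - q) ^ (2 * s₀)))) := by
          gcongr with n
          exact aux_int s₀ b hs₀u hb hb1 q n
      _ = _ := by
          rw [hCE, mul_assoc (ENNReal.ofReal D ^ 2 * (8 * M0)),
            ← ENNReal.tsum_mul_left (a := ENNReal.ofReal (2 * Real.pi))]
          congr 1
          refine tsum_congr fun n => ?_
          simp only [hF]
          push_cast
          ring
  have hfin : ∑' q : ℤ, ∑' n : ℤ, F n * F (-n - q) = ENNReal.ofReal S ^ 2 := by
    rw [ENNReal.tsum_comm, hSF, sq, ← ENNReal.tsum_mul_right]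
    refine tsum_congr fun n => ?_
    rw [ENNReal.tsum_mul_left]
    congr 1
    exact (Equiv.subLeft (-n)).tsum_eq F
  have htot : ENNReal.ofReal (∑' q : ℤ, ∫ τ : ℝ, jb (τ + (q : ℝ) ^ 2) ^ (2 * (b - 1)) *
                ‖∑' n : ℤ, (starRingEnd ℂ) (α n) * (starRingEnd ℂ) (α (-n - q)) *
                    ft (⇑ψ) (τ - (n : ℝ) ^ 2 - ((n : ℝ) + (q : ℝ)) ^ 2)‖ ^ 2) ≤
      ENNReal.ofReal ((CE.toReal + 1) * S ^ 2) := by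
    rw [← Real.enorm_of_nonneg (r := ∑' q : ℤ, ∫ τ : ℝ, _) (tsum_nonneg (fun q : ℤ => integral_nonneg (fun τ : ℝ =>
      mul_nonneg (hj _ _) (sq_nonneg _))))]
    refine enorm_tsum_le_tsum_enorm.trans ?_
    calc _ ≤ _ := ENNReal.tsum_le_tsum hq
      _ = CE * ENNReal.ofReal S ^ 2 := by rw [ENNReal.tsum_mul_left, hfin]
      _ = ENNReal.ofReal (CE.toReal * S ^ 2) := by
        rw [ENNReal.ofReal_mul ENNReal.toReal_nonneg, ENNReal.ofReal_toReal hCEtop,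
          ENNReal.ofReal_pow hS0]
      _ ≤ _ := by
        apply ENNReal.ofReal_le_ofReal
        gcongr
        linarith
  exact (ENNReal.ofReal_le_ofReal_iff (by positivity)).1 htot
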